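/- arXiv:math/0404557 — 4 statements merged into one kernel-verified Lean document; each statement's English description precedes it below -/
import Mathlib

section
/- Let x and y be intertwiners for θ (i.e. θ(a) ∘ x = x ∘ a and θ(a) ∘ y = y ∘ a for all a ∈ B(H)). Then there exists a scalar c ∈ ℂ such that x* ∘ y = c • id_H, where x* denotes the Hilbert-space adjoint of x. (In other words, the adjoint-composition of two intertwiners lies in the commutant ℂ·1 of B(H).) -/
open ContinuousLinearMap

/-!
Taking adjoints in `θ(a*) x = x a*` shows that `x*` intertwines `θ` with the identity
representation of `B(H)`. Hence `x* y` commutes with all of `B(H)`, whose center is `ℂ · 1`.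
-/

/-- `IsIntertwiner π ρ x` says that `x : V → W` intertwines the families of operators `π` on `V`
and `ρ` on `W`. The families are plain functions on an index type `A`, so that no algebraic
structure is imposed on them; the intertwiners for `θ : B(H) → B(K)` are the case `π = id`,
`ρ = θ`. -/
def IsIntertwiner {R A V W : Type*} [Semiring R]
    [AddCommMonoid V] [TopologicalSpace V] [Module R V]
    [AddCommMonoid W] [TopologicalSpace W] [Module R W]
    (π : A → V →L[R] V) (ρ : A → W →L[R] W) (x : V →L[R] W) : Prop :=
  ∀ a, ρ a ∘L x = x ∘L π a

namespace IsIntertwiner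

theorem comp {R A U V W : Type*} [Semiring R]
    [AddCommMonoid U] [TopologicalSpace U] [Module R U]
    [AddCommMonoid V] [TopologicalSpace V] [Module R V]
    [AddCommMonoid W] [TopologicalSpace W] [Module R W]
    {π : A → U →L[R] U} {ρ : A → V →L[R] V} {σ : A → W →L[R] W}
    {y : V →L[R] W} {x : U →L[R] V} (hy : IsIntertwiner ρ σ y) (hx : IsIntertwiner π ρ x) :
    IsIntertwiner π σ (y ∘L x) := fun a =>
  calc σ a ∘L (y ∘L x) = (σ a ∘L y) ∘L x := (comp_assoc _ _ _).symm
    _ = y ∘L (ρ a ∘L x) := by rw [hy a, comp_assoc]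
    _ = (y ∘L x) ∘L π a := by rw [hx a, comp_assoc]

theorem adjoint {𝕜 A E F : Type*} [RCLike 𝕜] [Star A]
    [NormedAddCommGroup E] [InnerProductSpace 𝕜 E] [CompleteSpace E]
    [NormedAddCommGroup F] [InnerProductSpace 𝕜 F] [CompleteSpace F]
    {π : A → E →L[𝕜] E} {ρ : A → F →L[𝕜] F} {x : E →L[𝕜] F}
    (hπ : ∀ a, π (star a) = star (π a)) (hρ : ∀ a, ρ (star a) = star (ρ a))
    (hx : IsIntertwiner π ρ x) : IsIntertwiner ρ π (ContinuousLinearMap.adjoint x) := fun a => by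
  have h_star : star (ρ a) ∘L x = x ∘L star (π a) := by rw [← hρ, ← hπ, hx]
  simpa only [star_eq_adjoint, adjoint_comp, adjoint_adjoint] using
    congrArg ContinuousLinearMap.adjoint h_star.symm

theorem exists_eq_smul_id {R V A : Type*} [Field R] [TopologicalSpace R] [IsTopologicalRing R]
    [AddCommGroup V] [TopologicalSpace V] [IsTopologicalAddGroup V] [Module R V]
    [ContinuousSMul R V] [SeparatingDual R V] {π : A → V →L[R] V} (hπ : Function.Surjective π)
    {T : V →L[R] V} (hT : IsIntertwiner π π T) :
    ∃ c : R, T = c • ContinuousLinearMap.id R V := by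
  have T_mem_center : T ∈ Subalgebra.center R (V →L[R] V) :=
    Subalgebra.mem_center_iff.mpr (hπ.forall.mpr hT)
  obtain ⟨c, hc⟩ := (Algebra.IsCentral.mem_center_iff R).mp T_mem_center
  exact ⟨c, hc.trans (Algebra.algebraMap_eq_smul_one c)⟩

end IsIntertwiner

theorem intertwiner_adjoint_comp_scalar_general {𝕜 A H K : Type*} [RCLike 𝕜] [Star A]
    [NormedAddCommGroup H] [InnerProductSpace 𝕜 H] [CompleteSpace H]
    [NormedAddCommGroup K] [InnerProductSpace 𝕜 K] [CompleteSpace K]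
    {π : A → H →L[𝕜] H} {ρ : A → K →L[𝕜] K} (hπ : Function.Surjective π)
    (hπ_star : ∀ a, π (star a) = star (π a)) (hρ_star : ∀ a, ρ (star a) = star (ρ a))
    {x y : H →L[𝕜] K} (hx : IsIntertwiner π ρ x) (hy : IsIntertwiner π ρ y) :
    ∃ c : 𝕜, adjoint x ∘L y = c • ContinuousLinearMap.id 𝕜 H :=
  ((hx.adjoint hπ_star hρ_star).comp hy).exists_eq_smul_id hπ

/-- If `x` and `y` are intertwiners for a unital star-algebra homomorphism
`θ : B(H) → B(K)`, then `x* ∘ y` is a scalar multiple of the identity on `H`. -/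
theorem intertwiner_adjoint_comp_scalar
    {H K : Type*} [NormedAddCommGroup H] [InnerProductSpace ℂ H] [CompleteSpace H]
    [NormedAddCommGroup K] [InnerProductSpace ℂ K] [CompleteSpace K]
    (θ : (H →L[ℂ] H) →⋆ₐ[ℂ] (K →L[ℂ] K))
    (x y : H →L[ℂ] K)
    (hx : ∀ a : H →L[ℂ] H, (θ a).comp x = x.comp a)
    (hy : ∀ a : H →L[ℂ] H, (θ a).comp y = y.comp a) :
    ∃ c : ℂ, (ContinuousLinearMap.adjoint x).comp y = c • ContinuousLinearMap.id ℂ H :=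
  intertwiner_adjoint_comp_scalar_general (π := id) (ρ := θ) Function.surjective_id
    (fun _ => rfl) (map_star θ) hx hy
end

section
/- Let x be an intertwiner for θ. Then x* ∘ x = ‖x‖² • id_H, where ‖x‖ is the operator norm of x and x* is its adjoint. In particular the unique scalar c with x* ∘ x = c • id_H (for H ≠ {0}) is real and nonnegative. -/
/-!
Taking adjoints in `θ(a*) x = x a*` gives `x* θ(a) = a x*`, so `x* x a = x* θ(a) x = a x* x`: the
operator `x* x` lies in the center of `B(H)`, which consists of the scalars. Evaluating at a unit
vector shows that the scalar is nonnegative, and the C*-identity `‖x* x‖ = ‖x‖²` identifies it.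
-/

open ContinuousLinearMap
open scoped InnerProduct

theorem exists_eq_smul_id_of_forall_commute {R V : Type*}
    [Field R] [TopologicalSpace R] [IsTopologicalRing R]
    [AddCommGroup V] [TopologicalSpace V] [IsTopologicalAddGroup V]
    [Module R V] [ContinuousSMul R V] [SeparatingDual R V]
    {T : V →L[R] V} (hT : ∀ a : V →L[R] V, Commute T a) :
    ∃ c : R, T = c • ContinuousLinearMap.id R V := by
  have hT_center : T ∈ Subalgebra.center R (V →L[R] V) :=
    Subalgebra.mem_center_iff.mpr fun a ↦ (hT a).symm
  exact (Algebra.IsCentral.mem_center_iff R).mp hT_center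

section

variable {𝕜 H K : Type*} [RCLike 𝕜]
  [NormedAddCommGroup H] [InnerProductSpace 𝕜 H] [CompleteSpace H]
  [NormedAddCommGroup K] [InnerProductSpace 𝕜 K] [CompleteSpace K]

theorem adjoint_comp_eq_comp_adjoint {H' K' : Type*}
    [NormedAddCommGroup H'] [InnerProductSpace 𝕜 H'] [CompleteSpace H']
    [NormedAddCommGroup K'] [InnerProductSpace 𝕜 K'] [CompleteSpace K']
    {x : H →L[𝕜] K} {y : H' →L[𝕜] K'} {a : H' →L[𝕜] H} {b : K' →L[𝕜] K}
    (h : b† ∘L x = y ∘L a†) : x† ∘L b = a ∘L y† := by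
  simpa only [adjoint_comp, adjoint_adjoint] using congrArg adjoint h

theorem commute_adjoint_comp_self {x : H →L[𝕜] K} {a : H →L[𝕜] H} {b : K →L[𝕜] K}
    (h : b ∘L x = x ∘L a) (h_adj : b† ∘L x = x ∘L a†) : Commute (x† ∘L x) a :=
  calc
    (x† ∘L x) ∘L a = x† ∘L (b ∘L x) := by rw [comp_assoc, h]
    _ = (a ∘L x†) ∘L x := by rw [← comp_assoc, adjoint_comp_eq_comp_adjoint h_adj]
    _ = a ∘L (x† ∘L x) := comp_assoc ..

theorem eq_norm_apply_sq_of_adjoint_comp_self_eq_smul_id {x : H →L[𝕜] K} {c : 𝕜}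
    (hc : x† ∘L x = c • ContinuousLinearMap.id 𝕜 H) {v : H} (hv : ‖v‖ = 1) :
    c = ((‖x v‖ ^ 2 : ℝ) : 𝕜) :=
  calc
    c = inner 𝕜 v ((c • ContinuousLinearMap.id 𝕜 H) v) := by
      simp [inner_smul_right, inner_self_eq_norm_sq_to_K, hv]
    _ = inner 𝕜 (x v) (x v) := by rw [← hc, comp_apply, adjoint_inner_right]
    _ = ((‖x v‖ ^ 2 : ℝ) : 𝕜) := by rw [inner_self_eq_norm_sq_to_K, RCLike.ofReal_pow]

theorem adjoint_comp_self_eq_norm_sq_smul_id {x : H →L[𝕜] K} {c : 𝕜}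
    (hc : x† ∘L x = c • ContinuousLinearMap.id 𝕜 H) :
    x† ∘L x = ((‖x‖ ^ 2 : ℝ) : 𝕜) • ContinuousLinearMap.id 𝕜 H := by
  nontriviality H
  obtain ⟨u, hu⟩ := exists_ne (0 : H)
  obtain ⟨v, hv⟩ : ∃ v : H, ‖v‖ = 1 := ⟨_, norm_smul_inv_norm (𝕜 := 𝕜) hu⟩
  have hcv := eq_norm_apply_sq_of_adjoint_comp_self_eq_smul_id hc hv
  have h_norm : ‖x‖ ^ 2 = ‖x v‖ ^ 2 :=
    calc
      ‖x‖ ^ 2 = ‖x† ∘L x‖ := by rw [norm_adjoint_comp_self, sq]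
      _ = ‖c‖ := by rw [hc, norm_smul, norm_id, mul_one]
      _ = ‖x v‖ ^ 2 := by rw [hcv, RCLike.norm_of_nonneg (sq_nonneg _)]
  rw [hc, hcv, h_norm]

theorem intertwiner_adjoint_comp_self_general {F : Type*}
    [FunLike F (H →L[𝕜] H) (K →L[𝕜] K)] [StarHomClass F (H →L[𝕜] H) (K →L[𝕜] K)]
    (θ : F) (x : H →L[𝕜] K) (hx : ∀ a : H →L[𝕜] H, θ a ∘L x = x ∘L a) :
    x† ∘L x = ((‖x‖ ^ 2 : ℝ) : 𝕜) • ContinuousLinearMap.id 𝕜 H := by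
  have hx_adj (a : H →L[𝕜] H) : (θ a)† ∘L x = x ∘L a† := by
    rw [← star_eq_adjoint (θ a), ← map_star, ← star_eq_adjoint a, hx]
  obtain ⟨c, hc⟩ := exists_eq_smul_id_of_forall_commute fun a ↦
    commute_adjoint_comp_self (hx a) (hx_adj a)
  exact adjoint_comp_self_eq_norm_sq_smul_id hc

end

/-- For an intertwiner `x` of a unital star-algebra homomorphism
`θ : B(H) → B(K)` one has `x* ∘ x = ‖x‖² • id_H`; in particular the scalar is a
nonnegative real number. -/
theorem intertwiner_adjoint_comp_self
    {H K : Type*} [NormedAddCommGroup H] [InnerProductSpace ℂ H] [CompleteSpace H]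
    [NormedAddCommGroup K] [InnerProductSpace ℂ K] [CompleteSpace K]
    (θ : (H →L[ℂ] H) →⋆ₐ[ℂ] (K →L[ℂ] K))
    (x : H →L[ℂ] K)
    (hx : ∀ a : H →L[ℂ] H, (θ a).comp x = x.comp a) :
    (ContinuousLinearMap.adjoint x).comp x
      = ((‖x‖ ^ 2 : ℝ) : ℂ) • ContinuousLinearMap.id ℂ H :=
  intertwiner_adjoint_comp_self_general θ x hx
end

section
/- Let ω ∈ H be a unit vector and let k ∈ K satisfy θ(ω ω*) k = k. Then the map x_k : H → K defined by x_k(h) = θ(h ω*) k is a bounded linear operator satisfying ‖x_k h‖ = ‖h‖·‖k‖ for all h ∈ H; it is an intertwiner for θ (θ(a) ∘ x_k = x_k ∘ a for all a ∈ B(H)); and x_k(ω) = k. (Hence x ↦ x ω maps the intertwiner space 𝔥^A onto 𝔥^B = θ(ωω*)K.) -/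
/-!
The map `h ↦ h ω*` is linear and satisfies `a (h ω*) = (a h) ω*`, so applying `θ` and evaluating
at `k` gives an intertwiner. Since `(h ω*)* (h' ω*) = ⟪h, h'⟫ ω ω*` and `θ` preserves adjoints and
products, `⟪θ(h ω*) k, θ(h' ω*) k⟫ = ⟪h, h'⟫ ⟪k, θ(ω ω*) k⟫`. On the diagonal this computes the
norm, so the map is bounded without any appeal to the continuity of `θ`.
-/

/-- The rank-one operator `h g* : f ↦ ⟪g, f⟫ h` (inner product conjugate-linear in the
first variable). -/
noncomputable def rankOne {H : Type*} [NormedAddCommGroup H] [InnerProductSpace ℂ H]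
    (h g : H) : H →L[ℂ] H :=
  (ContinuousLinearMap.toSpanSingleton ℂ h).comp (innerSL ℂ g)

theorem rankOne_eq_innerProductSpace_rankOne {H : Type*} [NormedAddCommGroup H]
    [InnerProductSpace ℂ H] (h g : H) : rankOne h g = InnerProductSpace.rankOne ℂ h g :=
  (InnerProductSpace.rankOne_def' h g).symm

section RankOneIntertwiner

variable {𝕜 H K : Type*} [RCLike 𝕜]
  [NormedAddCommGroup H] [InnerProductSpace 𝕜 H] [CompleteSpace H]
  [NormedAddCommGroup K] [InnerProductSpace 𝕜 K] [CompleteSpace K]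
  (θ : (H →L[𝕜] H) →⋆ₙₐ[𝕜] (K →L[𝕜] K))

theorem inner_map_rankOne_map_rankOne (h h' g g' : H) (k k' : K) :
    inner 𝕜 (θ (InnerProductSpace.rankOne 𝕜 h g) k) (θ (InnerProductSpace.rankOne 𝕜 h' g') k') =
      inner 𝕜 h h' * inner 𝕜 k (θ (InnerProductSpace.rankOne 𝕜 g g') k') := by
  have star_mul_eq : star (InnerProductSpace.rankOne 𝕜 h g) * InnerProductSpace.rankOne 𝕜 h' g' =
      inner 𝕜 h h' • InnerProductSpace.rankOne 𝕜 g g' := by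
    rw [ContinuousLinearMap.star_eq_adjoint, InnerProductSpace.adjoint_rankOne,
      ContinuousLinearMap.mul_def, InnerProductSpace.rankOne_comp_rankOne]
  calc
    _ = inner 𝕜 k (θ (star (InnerProductSpace.rankOne 𝕜 h g) *
          InnerProductSpace.rankOne 𝕜 h' g') k') := by
      rw [map_mul, map_star, mul_apply_eq_comp, ContinuousLinearMap.star_eq_adjoint,
        ContinuousLinearMap.adjoint_inner_right]
    _ = inner 𝕜 h h' * inner 𝕜 k (θ (InnerProductSpace.rankOne 𝕜 g g') k') := by
      rw [star_mul_eq, map_smul, smul_apply, inner_smul_right]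

theorem norm_map_rankOne_apply (h g : H) (k : K) :
    ‖θ (InnerProductSpace.rankOne 𝕜 h g) k‖ =
      ‖h‖ * √(RCLike.re (inner 𝕜 k (θ (InnerProductSpace.rankOne 𝕜 g g) k))) := by
  rw [norm_eq_sqrt_re_inner (𝕜 := 𝕜), inner_map_rankOne_map_rankOne, inner_self_eq_norm_sq_to_K,
    ← RCLike.ofReal_pow, RCLike.re_ofReal_mul, Real.sqrt_mul (sq_nonneg _),
    Real.sqrt_sq (norm_nonneg h)]

/-- The bounded operator `h ↦ θ(h g*) k` from `H` to `K`, the paper's `x_k` when `g = ω`.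
It is built for arbitrary `k`, with norm bound `⟪k, θ(g g*) k⟫ ^ (1/2)`, which equals `‖k‖` when
`θ(g g*)` fixes `k`. -/
noncomputable def rankOneIntertwiner (g : H) (k : K) : H →L[𝕜] K :=
  LinearMap.mkContinuous
    { toFun := fun h ↦ θ (InnerProductSpace.rankOne 𝕜 h g) k
      map_add' := fun h₁ h₂ ↦ by simp only [map_add, add_apply]
      map_smul' := fun c h ↦ by simp only [map_smul, smul_apply, RingHom.id_apply] }
    √(RCLike.re (inner 𝕜 k (θ (InnerProductSpace.rankOne 𝕜 g g) k)))
    fun h ↦ (norm_map_rankOne_apply θ h g k).le.trans_eq (mul_comm _ _)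

@[simp]
theorem rankOneIntertwiner_apply (g : H) (k : K) (h : H) :
    rankOneIntertwiner θ g k h = θ (InnerProductSpace.rankOne 𝕜 h g) k :=
  rfl

theorem norm_rankOneIntertwiner_apply {g : H} {k : K}
    (hk : θ (InnerProductSpace.rankOne 𝕜 g g) k = k) (h : H) :
    ‖rankOneIntertwiner θ g k h‖ = ‖h‖ * ‖k‖ := by
  rw [rankOneIntertwiner_apply, norm_map_rankOne_apply, hk, ← norm_eq_sqrt_re_inner]

theorem map_comp_rankOneIntertwiner (g : H) (k : K) (a : H →L[𝕜] H) :
    (θ a).comp (rankOneIntertwiner θ g k) = (rankOneIntertwiner θ g k).comp a := by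
  ext h
  simp only [ContinuousLinearMap.comp_apply, rankOneIntertwiner_apply]
  rw [← InnerProductSpace.comp_rankOne, ← ContinuousLinearMap.mul_def, map_mul, mul_apply_eq_comp]

theorem intertwiner_apply_unitVector_surjective_general {ω : H} {k : K}
    (hk : θ (InnerProductSpace.rankOne 𝕜 ω ω) k = k) :
    ∃ x : H →L[𝕜] K,
      (∀ h : H, x h = θ (InnerProductSpace.rankOne 𝕜 h ω) k) ∧
      (∀ h : H, ‖x h‖ = ‖h‖ * ‖k‖) ∧
      (∀ a : H →L[𝕜] H, (θ a).comp x = x.comp a) ∧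
      x ω = k :=
  ⟨rankOneIntertwiner θ ω k, rankOneIntertwiner_apply θ ω k, norm_rankOneIntertwiner_apply θ hk,
    map_comp_rankOneIntertwiner θ ω k, hk⟩

end RankOneIntertwiner

/-- For a unit vector `ω ∈ H` and `k ∈ K` with `θ(ωω*)k = k`, the map
`h ↦ θ(h ω*) k` is a bounded linear operator `x_k : H → K` with `‖x_k h‖ = ‖h‖‖k‖`, it is
an intertwiner for `θ`, and `x_k ω = k`. Hence `x ↦ x ω` maps `𝔥^A` onto `𝔥^B`. -/
theorem intertwiner_apply_unitVector_surjective
    {H K : Type*} [NormedAddCommGroup H] [InnerProductSpace ℂ H] [CompleteSpace H]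
    [NormedAddCommGroup K] [InnerProductSpace ℂ K] [CompleteSpace K]
    (θ : (H →L[ℂ] H) →⋆ₐ[ℂ] (K →L[ℂ] K))
    (ω : H) (hω : ‖ω‖ = 1)
    (k : K) (hk : θ (rankOne ω ω) k = k) :
    ∃ x : H →L[ℂ] K,
      (∀ h : H, x h = θ (rankOne h ω) k) ∧
      (∀ h : H, ‖x h‖ = ‖h‖ * ‖k‖) ∧
      (∀ a : H →L[ℂ] H, (θ a).comp x = x.comp a) ∧
      x ω = k := by
  simp only [rankOne_eq_innerProductSpace_rankOne] at hk ⊢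
  exact intertwiner_apply_unitVector_surjective_general θ.toNonUnitalStarAlgHom hk
end

section
/- The complex linear span of { xᴴ y : x, y ∈ E } equals B. (That is, the Hilbert B-module E is full: the range of its inner product spans all of B.) -/
/-!
A matrix supported on a relation `t` is a sum of matrix units supported on `t`, and if `r i j` and
`s j k` then `single i k c = single i j 1 * single j k c`. Hence the products of matrices supported
on `r` with matrices supported on `s` span the matrices supported on the composite relation, and
passing from `x` to `xᴴ` reverses the relation. Now split the indices into two nonempty classes,
and let `r` relate indices of different classes. Two indices have a common `r`-neighbour exactly
when they lie in the same class, so the inner products span the block-diagonal matrices.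
-/

open Matrix

section

variable {l m n : Type*} (S R : Type*) [Semiring S]

/-- The `S`-submodule of matrices over `R` vanishing outside the positions `(i, j)` with `r i j`;
it encodes block patterns such as those of `E` and `B`. The scalars `S` may differ from the type `R`
of entries. -/
def supportedMatrices [AddCommMonoid R] [Module S R] (r : m → n → Prop) :
    Submodule S (Matrix m n R) where
  carrier := {x | ∀ i j, ¬ r i j → x i j = 0}
  zero_mem' _ _ _ := rfl
  add_mem' hx hy i j hij := by rw [Matrix.add_apply, hx i j hij, hy i j hij, add_zero]
  smul_mem' c x hx i j hij := by rw [Matrix.smul_apply, hx i j hij, smul_zero]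

namespace supportedMatrices

section Membership

variable {S R}

section AddCommMonoid

variable [AddCommMonoid R] [Module S R] {r : m → n → Prop}

theorem mem_iff {x : Matrix m n R} :
    x ∈ supportedMatrices S R r ↔ ∀ i j, ¬ r i j → x i j = 0 :=
  Iff.rfl

theorem single_mem [DecidableEq m] [DecidableEq n] {i : m} {j : n} (hij : r i j) (c : R) :
    single i j c ∈ supportedMatrices S R r := by
  intro i' j' h
  refine single_apply_of_ne _ _ _ _ _ ?_
  rintro ⟨rfl, rfl⟩
  exact h hij

theorem le_of_single_mem [Finite m] [Finite n] [DecidableEq m] [DecidableEq n]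
    {P : Submodule S (Matrix m n R)} (hP : ∀ i j, r i j → ∀ c, single i j c ∈ P) :
    supportedMatrices S R r ≤ P := by
  have := Fintype.ofFinite m
  have := Fintype.ofFinite n
  intro x hx
  rw [matrix_eq_sum_single x]
  refine P.sum_mem fun i _ => P.sum_mem fun j _ => ?_
  by_cases hij : r i j
  · exact hP i j hij (x i j)
  · rw [hx i j hij, single_zero]
    exact P.zero_mem

end AddCommMonoid

theorem conjTranspose_mem_iff [AddCommMonoid R] [StarAddMonoid R] [Module S R] {r : m → n → Prop}
    {x : Matrix n m R} :
    xᴴ ∈ supportedMatrices S R r ↔ x ∈ supportedMatrices S R (flip r) := by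
  simp only [mem_iff, conjTranspose_apply, star_eq_zero, flip]
  exact forall_comm

theorem mul_mem [Fintype m] [NonUnitalNonAssocSemiring R] [Module S R] {r : l → m → Prop}
    {s : m → n → Prop} {x : Matrix l m R} {y : Matrix m n R} (hx : x ∈ supportedMatrices S R r)
    (hy : y ∈ supportedMatrices S R s) : x * y ∈ supportedMatrices S R (Relation.Comp r s) := by
  intro i k hik
  rw [mul_apply]
  refine Finset.sum_eq_zero fun j _ => ?_
  by_cases hij : r i j
  · rw [hy j k fun hjk => hik ⟨j, hij, hjk⟩, mul_zero]
  · rw [hx i j hij, zero_mul]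

end Membership

theorem image_conjTranspose [AddCommMonoid R] [StarAddMonoid R] [Module S R] (r : m → n → Prop) :
    conjTranspose '' (supportedMatrices S R r : Set (Matrix m n R)) =
      supportedMatrices S R (flip r) := by
  rw [Set.image_eq_preimage_of_inverse conjTranspose_conjTranspose conjTranspose_conjTranspose]
  ext x
  exact conjTranspose_mem_iff

theorem span_image2_mul [Finite l] [Fintype m] [Finite n] [NonAssocSemiring R] [Module S R]
    (r : l → m → Prop) (s : m → n → Prop) :
    Submodule.span S (Set.image2 (fun (x : Matrix l m R) (y : Matrix m n R) => x * y)
      (supportedMatrices S R r) (supportedMatrices S R s)) =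
      supportedMatrices S R (Relation.Comp r s) := by
  classical
  apply le_antisymm
  · rw [Submodule.span_le, Set.image2_subset_iff]
    exact fun x hx y hy => mul_mem hx hy
  · refine le_of_single_mem fun i k ⟨j, hij, hjk⟩ c => Submodule.subset_span ?_
    exact ⟨single i j 1, single_mem hij 1, single j k c, single_mem hjk c, by simp⟩

theorem span_image2_conjTranspose_mul [Finite l] [Fintype m] [Finite n] [NonAssocSemiring R]
    [StarRing R] [Module S R] (r : m → l → Prop) (s : m → n → Prop) :
    Submodule.span S (Set.image2 (fun (x : Matrix m l R) (y : Matrix m n R) => xᴴ * y)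
      (supportedMatrices S R r) (supportedMatrices S R s)) =
      supportedMatrices S R (Relation.Comp (flip r) s) := by
  rw [← span_image2_mul, ← image_conjTranspose, Set.image2_image_left]

theorem coe_offDiagonalBlocks_fin_three [AddCommMonoid R] [Module S R] :
    (supportedMatrices S R fun i j : Fin 3 => ¬ (i = 0 ↔ j = 0) : Set (Matrix (Fin 3) (Fin 3) R)) =
      {x | x 0 0 = 0 ∧ x 1 1 = 0 ∧ x 1 2 = 0 ∧ x 2 1 = 0 ∧ x 2 2 = 0} := by
  ext x
  simp [mem_iff, Fin.forall_fin_succ, and_assoc]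

theorem coe_diagonalBlocks_fin_three [AddCommMonoid R] [Module S R] :
    (supportedMatrices S R fun i j : Fin 3 => (i = 0 ↔ j = 0) : Set (Matrix (Fin 3) (Fin 3) R)) =
      {b | b 0 1 = 0 ∧ b 0 2 = 0 ∧ b 1 0 = 0 ∧ b 2 0 = 0} := by
  ext b
  simp [mem_iff, Fin.forall_fin_succ, and_assoc]

end supportedMatrices

theorem comp_flip_not_iff {p : n → Prop} (hp : ∃ i, p i) (hp' : ∃ i, ¬ p i) :
    Relation.Comp (flip fun i j => ¬ (p i ↔ p j)) (fun i j => ¬ (p i ↔ p j)) =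
      fun i j => (p i ↔ p j) := by
  ext i j
  constructor
  · rintro ⟨k, hki, hkj⟩
    simp only [flip] at hki
    tauto
  · intro hij
    obtain ⟨k, hki⟩ : ∃ k, ¬ (p k ↔ p i) := by
      by_cases hi : p i
      · exact hp'.imp fun k hk h => hk (h.2 hi)
      · exact hp.imp fun k hk h => hi (h.1 hk)
    exact ⟨k, hki, fun hkj => hki (hkj.trans hij.symm)⟩

theorem module_is_full_general [Fintype n] [NonAssocSemiring R] [StarRing R] [Module S R]
    {p : n → Prop} (hp : ∃ i, p i) (hp' : ∃ i, ¬ p i) :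
    Submodule.span S (Set.image2 (fun x y : Matrix n n R => xᴴ * y)
      (supportedMatrices S R fun i j => ¬ (p i ↔ p j))
      (supportedMatrices S R fun i j => ¬ (p i ↔ p j))) =
      supportedMatrices S R fun i j => (p i ↔ p j) := by
  rw [supportedMatrices.span_image2_conjTranspose_mul, comp_flip_not_iff hp hp']

end

/-- The complex linear span of `{xᴴ y : x, y ∈ E}` equals `B`, where
`E` is the set of 3×3 complex matrices of block pattern `(0 * *; * 0 0; * 0 0)` and
`B` is the set of block-diagonal matrices `ℂ ⊕ M₂(ℂ)`. That is, the Hilbert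
`B`-module `E` is full. -/
theorem module_is_full :
    (Submodule.span ℂ
        {m : Matrix (Fin 3) (Fin 3) ℂ |
          ∃ x ∈ {x : Matrix (Fin 3) (Fin 3) ℂ |
                  x 0 0 = 0 ∧ x 1 1 = 0 ∧ x 1 2 = 0 ∧ x 2 1 = 0 ∧ x 2 2 = 0},
          ∃ y ∈ {y : Matrix (Fin 3) (Fin 3) ℂ |
                  y 0 0 = 0 ∧ y 1 1 = 0 ∧ y 1 2 = 0 ∧ y 2 1 = 0 ∧ y 2 2 = 0},
            m = xᴴ * y} : Set (Matrix (Fin 3) (Fin 3) ℂ))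
      = {b : Matrix (Fin 3) (Fin 3) ℂ |
          b 0 1 = 0 ∧ b 0 2 = 0 ∧ b 1 0 = 0 ∧ b 2 0 = 0} := by
  rw [← supportedMatrices.coe_offDiagonalBlocks_fin_three ℂ ℂ,
    ← supportedMatrices.coe_diagonalBlocks_fin_three ℂ ℂ,
    ← module_is_full_general ℂ ℂ (p := fun i : Fin 3 => i = 0) ⟨0, rfl⟩ ⟨1, one_ne_zero⟩]
  simp only [Set.image2, SetLike.mem_coe, eq_comm]
end
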